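/- arXiv:2505.22127 — 2 statements merged into one kernel-verified Lean document; each statement's English description precedes it below -/
import Mathlib

section
/- Let n ≥ 2 and let (i_1,…,i_N), N = n(n−1)/2, be a reduced word for the longest element w_0 of S_n. Let t_1 < t_2 < ⋯ < t_{n−1} be the greedy indices for the pattern (n−1, n−2, …, 1): t_1 is minimal with i_{t_1} = n−1, and for k ≥ 2, t_k is minimal subject to t_k > t_{k−1} and i_{t_k} = n−k. For 0 ≤ t ≤ N set w^{(t)} := s_{i_t} ∘ s_{i_{t−1}} ∘ ⋯ ∘ s_{i_1} (applying s_{i_1} first; w^{(0)} = id). Then for every 1 ≤ k ≤ n−1 one has w^{(t_k − 1)}(n) = n−k+1. (Equivalently: each greedy crossing t_k lies on the wire ℓ_n, which sits at level n−k+1 just before that crossing; these are exactly the crossings of ℓ_n with the other wires, as used for the weight-zero string z_{n−1}.) -/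
/-- The adjacent transposition `s_j` swapping `j` and `j+1` (acting on `ℕ`,
restricting to the usual generator of the symmetric group on `{1, …, n}`). -/
def adjSwap (j : ℕ) : Equiv.Perm ℕ := Equiv.swap j (j + 1)

/-!
The inversion number of the permutation read off a wiring diagram rises by at most one per
crossing, so in a reduced word every crossing creates a new inversion: the lower of the two crossing
wires is the one that started lower. Hence the top wire `n` is never the lower wire of a crossing;
it only descends, and it leaves level `L` exactly at the next letter `L - 1`. Starting from
level `n`, those exits are the greedy indices for `n - 1, n - 2, …`.
-/

open Finset

/-- The inversions of `f` on `s`: the pairs of elements of `s` whose order is reversed by `f`,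
recorded with the smaller element first. On `s = {1, …, n}` their number is the Coxeter length of a
permutation in `S_n`. -/
def inversions {α β : Type*} [LinearOrder α] [LinearOrder β] (s : Finset α) (f : α → β) :
    Finset (α × α) :=
  {x ∈ s ×ˢ s | x.1 < x.2 ∧ f x.2 < f x.1}

section Inversions

variable {α β : Type*} [LinearOrder α] [LinearOrder β] {s : Finset α}

lemma mem_inversions {f : α → β} {x : α × α} :
    x ∈ inversions s f ↔ (x.1 ∈ s ∧ x.2 ∈ s) ∧ x.1 < x.2 ∧ f x.2 < f x.1 := by
  rw [inversions, mem_filter, mem_product]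

lemma inversions_of_monotoneOn {f : α → β} (hf : MonotoneOn f s) : inversions s f = ∅ := by
  refine eq_empty_of_forall_notMem fun x hx => ?_
  obtain ⟨⟨h₁, h₂⟩, hlt, hinv⟩ := mem_inversions.mp hx
  exact hinv.not_ge (hf h₁ h₂ hlt.le)

lemma card_inversions_of_strictAntiOn {f : α → β} (hf : StrictAntiOn f s) :
    #(inversions s f) = (#s).choose 2 := by
  rw [← card_product_filter_lt, inversions]
  congr 1
  refine filter_congr fun x hx => and_iff_left_of_imp fun hlt => ?_
  exact hf (mem_product.mp hx).1 (mem_product.mp hx).2 hlt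

end Inversions

section Crossing

lemma adjSwap_mul_self (j : ℕ) : adjSwap j * adjSwap j = 1 :=
  Equiv.swap_mul_self _ _

lemma eq_and_eq_add_one_of_adjSwap_lt {j a b : ℕ} (hab : a < b)
    (h : adjSwap j b < adjSwap j a) : a = j ∧ b = j + 1 := by
  simp only [adjSwap, Equiv.swap_apply_def] at h
  split_ifs at h <;> omega

variable {α : Type*} [LinearOrder α] {s : Finset α} {f : α → ℕ} {j : ℕ}

lemma mem_inversions_or_of_mem_adjSwap_comp (hf : f.Injective) {x : α × α}
    (hx : x ∈ inversions s (adjSwap j ∘ f)) :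
    x ∈ inversions s f ∨ f x.1 = j ∧ f x.2 = j + 1 := by
  obtain ⟨hs, hlt, hinv⟩ := mem_inversions.mp hx
  obtain h | h := (hf.ne hlt.ne).lt_or_gt
  · exact .inr (eq_and_eq_add_one_of_adjSwap_lt h hinv)
  · exact .inl (mem_inversions.mpr ⟨hs, hlt, h⟩)

lemma card_inversions_adjSwap_comp_le (hf : f.Injective) :
    #(inversions s (adjSwap j ∘ f)) ≤ #(inversions s f) + 1 := by
  have hnew : ∀ x ∈ inversions s (adjSwap j ∘ f) \ inversions s f, f x.1 = j ∧ f x.2 = j + 1 :=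
    fun x hx => (mem_inversions_or_of_mem_adjSwap_comp hf (mem_sdiff.mp hx).1).resolve_left
      (mem_sdiff.mp hx).2
  have hone : #(inversions s (adjSwap j ∘ f) \ inversions s f) ≤ 1 := by
    refine card_le_one.mpr fun x hx y hy => Prod.ext (hf ?_) (hf ?_)
    · rw [(hnew x hx).1, (hnew y hy).1]
    · rw [(hnew x hx).2, (hnew y hy).2]
  have hsdiff := card_le_card_sdiff_add_card
    (s := inversions s (adjSwap j ∘ f)) (t := inversions s f)
  lia

lemma exists_lt_of_card_inversions_lt (hf : f.Injective)
    (h : #(inversions s f) < #(inversions s (adjSwap j ∘ f))) :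
    ∃ p ∈ s, ∃ q ∈ s, p < q ∧ f p = j ∧ f q = j + 1 := by
  obtain ⟨⟨p, q⟩, hmem, hnotMem⟩ := exists_mem_notMem_of_card_lt_card h
  obtain ⟨⟨hp, hq⟩, hlt, -⟩ := mem_inversions.mp hmem
  exact ⟨p, hp, q, hq, hlt, (mem_inversions_or_of_mem_adjSwap_comp hf hmem).resolve_left hnotMem⟩

end Crossing

/-- The permutation `w^{(m)} = s_{i m} ∘ ⋯ ∘ s_{i 1}` after the first `m` crossings of the wiring
diagram of the word `i`, sending each wire to its level. Letters are indexed from `1`; `i 0` is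
ignored. -/
def wiring (i : ℕ → ℕ) : ℕ → Equiv.Perm ℕ
  | 0 => 1
  | m + 1 => adjSwap (i (m + 1)) * wiring i m

/-- The first `N` letters of `i` form a reduced word of a permutation of `{1, …, n}`, encoded by
the formula `length = number of inversions` for the symmetric group. -/
def IsReducedWord (n : ℕ) (i : ℕ → ℕ) (N : ℕ) : Prop :=
  #(inversions (Icc 1 n) (wiring i N)) = N

section Wiring

variable {i : ℕ → ℕ}

lemma eq_wiring {W : ℕ → Equiv.Perm ℕ} (hzero : W 0 = 1)
    (hsucc : ∀ m, W (m + 1) = adjSwap (i (m + 1)) * W m) : W = wiring i := by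
  funext m
  induction m with
  | zero => rw [hzero, wiring]
  | succ m ih => rw [hsucc, ih, wiring]

lemma prod_map_adjSwap_mul_wiring (i : ℕ → ℕ) (m : ℕ) :
    ((List.range m).map fun r => adjSwap (i (r + 1))).prod * wiring i m = 1 := by
  induction m with
  | zero => simp only [List.range_zero, List.map_nil, List.prod_nil, wiring, mul_one]
  | succ m ih =>
    rw [List.range_succ, List.map_append, List.prod_append, List.map_singleton,
      List.prod_singleton, wiring, mul_assoc, ← mul_assoc (adjSwap _), adjSwap_mul_self, one_mul,
      ih]

lemma inversions_wiring_zero (s : Finset ℕ) : inversions s (wiring i 0) = ∅ :=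
  inversions_of_monotoneOn (monotone_id.monotoneOn _)

lemma card_inversions_wiring_le (s : Finset ℕ) {a b : ℕ} (hab : a ≤ b) :
    #(inversions s (wiring i b)) ≤ #(inversions s (wiring i a)) + (b - a) := by
  induction b, hab using Nat.le_induction with
  | base => exact Nat.le_add_right _ _
  | succ b hab ih =>
    have hstep : #(inversions s (wiring i (b + 1))) ≤ #(inversions s (wiring i b)) + 1 :=
      card_inversions_adjSwap_comp_le (wiring i b).injective
    lia

lemma wiring_apply_of_apply_pred_eq_add_one {r p : ℕ} (hr : 1 ≤ r)
    (h : wiring i (r - 1) p = i r + 1) : wiring i r p = i r := by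
  obtain ⟨r, rfl⟩ := Nat.exists_eq_add_of_le' hr
  rw [Nat.add_sub_cancel] at h
  rw [wiring, Equiv.Perm.mul_apply, h]
  exact Equiv.swap_apply_right _ _

end Wiring

namespace IsReducedWord

variable {n N : ℕ} {i : ℕ → ℕ}

lemma of_longest (hN : N = n * (n - 1) / 2)
    (hword : ∀ j ∈ Icc 1 n,
      (((List.range N).map fun r => adjSwap (i (r + 1))).prod : Equiv.Perm ℕ) j = n + 1 - j) :
    IsReducedWord n i N := by
  have happly : ∀ p ∈ Icc 1 n, wiring i N p = n + 1 - p := by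
    intro p hp
    have hp' := mem_Icc.mp hp
    rw [eq_inv_of_mul_eq_one_left (prod_map_adjSwap_mul_wiring i N)] at hword
    have hinv := hword (n + 1 - p) (by rw [mem_Icc]; lia)
    rw [Equiv.Perm.inv_eq_iff_eq, show n + 1 - (n + 1 - p) = p by lia] at hinv
    exact hinv.symm
  have hanti : StrictAntiOn (wiring i N) (Icc 1 n : Finset ℕ) := by
    intro p hp q hq hpq
    rw [happly p hp, happly q hq]
    have := mem_Icc.mp hq
    lia
  rw [IsReducedWord, card_inversions_of_strictAntiOn hanti, Nat.card_Icc, Nat.add_sub_cancel,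
    Nat.choose_two_right, hN]

lemma exists_lt_crossing (h : IsReducedWord n i N) {m : ℕ} (hm : m < N) :
    ∃ p ∈ Icc 1 n, ∃ q ∈ Icc 1 n,
      p < q ∧ wiring i m p = i (m + 1) ∧ wiring i m q = i (m + 1) + 1 := by
  have hbefore : #(inversions (Icc 1 n) (wiring i m)) ≤ m := by
    simpa only [inversions_wiring_zero, card_empty, zero_add, Nat.sub_zero] using
      card_inversions_wiring_le (i := i) (Icc 1 n) m.zero_le
  have hafter : N ≤ #(inversions (Icc 1 n) (wiring i (m + 1))) + (N - (m + 1)) :=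
    h.symm.le.trans (card_inversions_wiring_le _ hm)
  exact exists_lt_of_card_inversions_lt (wiring i m).injective
    (show _ < #(inversions _ (wiring i (m + 1))) by lia)

lemma wiring_apply_top_ne (h : IsReducedWord n i N) {m : ℕ} (hm : m < N) :
    wiring i m n ≠ i (m + 1) := by
  obtain ⟨p, -, q, hq, hpq, hp, -⟩ := h.exists_lt_crossing hm
  intro htop
  have hpn : p = n := (wiring i m).injective (hp.trans htop.symm)
  exact (hpq.trans_le (mem_Icc.mp hq).2).ne hpn

lemma wiring_apply_top_eq_of_forall_ne (h : IsReducedWord n i N) {a b L : ℕ} (hab : a ≤ b)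
    (hb : b ≤ N) (ha : wiring i a n = L) (hne : ∀ r, a < r → r ≤ b → i r + 1 ≠ L) :
    wiring i b n = L := by
  induction b, hab using Nat.le_induction with
  | base => exact ha
  | succ b hab ih =>
    have hlevel : wiring i b n = L := ih (by lia) fun r har hrb => hne r har (by lia)
    have hlower : L ≠ i (b + 1) := hlevel ▸ h.wiring_apply_top_ne hb
    have hupper : L ≠ i (b + 1) + 1 := (hne (b + 1) (by lia) le_rfl).symm
    rw [wiring, Equiv.Perm.mul_apply, hlevel]
    exact Equiv.swap_apply_of_ne_of_ne hlower hupper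

end IsReducedWord

theorem greedy_crossings_on_wire_n_general {n N m : ℕ} (hm : m ≤ n - 1) {i : ℕ → ℕ}
    (hred : IsReducedWord n i N) {t : ℕ → ℕ}
    (ht_range : ∀ k ∈ Icc 1 m, t k ∈ Icc 1 N)
    (ht_letter : ∀ k ∈ Icc 1 m, i (t k) = n - k)
    (ht_mono : ∀ k, 1 ≤ k → k + 1 ≤ m → t k < t (k + 1))
    (ht_min1 : ∀ r ∈ Icc 1 N, r < t 1 → i r ≠ n - 1)
    (ht_min : ∀ k, 2 ≤ k → k ≤ m → ∀ r ∈ Icc 1 N, t (k - 1) < r → r < t k → i r ≠ n - k) :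
    ∀ k ∈ Icc 1 m, wiring i (t k - 1) n = n - k + 1 := by
  simp only [mem_Icc] at *
  rintro k ⟨hk, hkm⟩
  induction k, hk using Nat.le_induction with
  | base =>
    have hrange := ht_range 1 ⟨le_rfl, hkm⟩
    have hstart : wiring i 0 n = n - 1 + 1 := by
      rw [wiring, Equiv.Perm.one_apply]
      lia
    refine hred.wiring_apply_top_eq_of_forall_ne (Nat.zero_le _) (by lia) hstart fun r _ _ => ?_
    have := ht_min1 r (by lia) (by lia)
    lia
  | succ k hk ih =>
    have hrange := ht_range k ⟨hk, by lia⟩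
    have hrange_succ := ht_range (k + 1) ⟨by lia, hkm⟩
    have hlt := ht_mono k hk hkm
    have hletter := ht_letter k ⟨hk, by lia⟩
    have hcross : wiring i (t k) n = n - (k + 1) + 1 := by
      have hbefore : wiring i (t k - 1) n = i (t k) + 1 := by rw [ih (by lia), hletter]
      rw [wiring_apply_of_apply_pred_eq_add_one hrange.1 hbefore]
      lia
    refine hred.wiring_apply_top_eq_of_forall_ne (by lia) (by lia) hcross fun r har _ => ?_
    have := ht_min (k + 1) (by lia) hkm r (by lia) har (by lia)
    lia

/-- for a reduced word `(i 1, …, i N)`, `N = n(n-1)/2`, of the longest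
element `w₀` of `Sₙ`, with greedy indices `t 1 < ⋯ < t (n-1)` for the pattern
`(n-1, n-2, …, 1)`, and with `W m = s_{i m} ∘ ⋯ ∘ s_{i 1}` (applying `s_{i 1}` first,
`W 0 = id`), one has `W (t k - 1) n = n - k + 1` for all `1 ≤ k ≤ n-1`. -/
theorem greedy_crossings_on_wire_n
    (n N : ℕ) (hn : 2 ≤ n) (hN : N = n * (n - 1) / 2)
    (i : ℕ → ℕ) (hi : ∀ t ∈ Finset.Icc 1 N, 1 ≤ i t ∧ i t ≤ n - 1)
    (hword : ∀ j ∈ Finset.Icc 1 n,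
      (((List.range N).map fun t => adjSwap (i (t + 1))).prod : Equiv.Perm ℕ) j
        = n + 1 - j)
    (t : ℕ → ℕ)
    (ht_range : ∀ k ∈ Finset.Icc 1 (n - 1), t k ∈ Finset.Icc 1 N)
    (ht_letter : ∀ k ∈ Finset.Icc 1 (n - 1), i (t k) = n - k)
    (ht_mono : ∀ k, 1 ≤ k → k + 1 ≤ n - 1 → t k < t (k + 1))
    (ht_min1 : ∀ r ∈ Finset.Icc 1 N, r < t 1 → i r ≠ n - 1)
    (ht_min : ∀ k, 2 ≤ k → k ≤ n - 1 →
      ∀ r ∈ Finset.Icc 1 N, t (k - 1) < r → r < t k → i r ≠ n - k)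
    (W : ℕ → Equiv.Perm ℕ) (hW0 : W 0 = 1)
    (hWs : ∀ m, W (m + 1) = adjSwap (i (m + 1)) * W m) :
    ∀ k ∈ Finset.Icc 1 (n - 1), W (t k - 1) n = n - k + 1 := by
  obtain rfl := eq_wiring hW0 hWs
  exact greedy_crossings_on_wire_n_general le_rfl (.of_longest hN hword) ht_range ht_letter
    ht_mono ht_min1 ht_min
end

section
/- Let n ≥ 3 and let (i_1,…,i_N), N = n(n−1)/2, be a reduced word for the longest element w_0 of S_n, with greedy indices t_1 < ⋯ < t_{n−1} for the pattern (n−1, n−2, …, 1), and let z ∈ {0,1}^N be the corresponding indicator vector (z_r = 1 iff r ∈ {t_1,…,t_{n−1}}). Let λ = Σ_{a=1}^{n−1} λ_a ω_a be a dominant integral weight (all λ_a ∈ ℤ_{≥0}). If a ∈ ℤ_{≥0}^N satisfies Littelmann's string inequalities for λ, i.e. a_r ≤ ⟨λ − Σ_{r<j≤N} a_j α_{i_j}, α^∨_{i_r}⟩ for all 1 ≤ r ≤ N, then a + z satisfies Littelmann's string inequalities for λ + θ, i.e. a_r + z_r ≤ ⟨λ + θ − Σ_{r<j≤N} (a_j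 + z_j) α_{i_j}, α^∨_{i_r}⟩ for all 1 ≤ r ≤ N. (This is the Littelmann-inequality part of the embedding ψ^n_{n−1} : S_i(λ) → S_i(λ+θ) given by x ↦ x + z_{n−1}.) -/
/-- The type `A` Cartan pairing `⟨α_p, α_q^∨⟩`: `2` if `p = q`, `-1` if `|p - q| = 1`,
and `0` otherwise. -/
def cartan (p q : ℕ) : ℤ :=
  if p = q then 2 else if p + 1 = q ∨ q + 1 = p then -1 else 0

/-- The pairing `⟨θ, α_p^∨⟩` of the highest root `θ = α_1 + ⋯ + α_{n-1}` of `sl_n`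
(`n ≥ 3`) with the simple coroots: `1` if `p ∈ {1, n-1}`, `0` otherwise. -/
def thetaPair (n p : ℕ) : ℤ := if p = 1 ∨ p = n - 1 then 1 else 0

/-!
The string inequalities are linear in the pair (weight, vector), so it suffices that `z` itself
satisfies them for `θ`. Fix a position `r` with letter `n - k`. Only the greedy indices with
letter `n - k` or a neighbour of it contribute, and the inequality reads
`[r ≤ t k] + [r < t k] ≤ [r < t (k - 1)] + [r < t (k + 1)] + ⟨θ, α_{n-k}^∨⟩`.
Greediness turns `r < t k` into `r < t (k - 1)`, and monotonicity turns `r ≤ t k` into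
`r < t (k + 1)` unless `k = n - 1`, that is, unless the letter is `1`; there `θ` contributes `1`.
-/

open Finset

theorem cartan_sub_sub {n p q : ℕ} (hp : p ≤ n) (hq : q ≤ n) :
    cartan (n - p) (n - q) = cartan p q := by
  unfold cartan
  split_ifs <;> omega

theorem sum_cartan {m : ℕ} (hm : m ≠ 0) (T : Finset ℕ) :
    ∑ k ∈ T, cartan k m =
      (if m ∈ T then 2 else 0) - (if m - 1 ∈ T then 1 else 0)
        - (if m + 1 ∈ T then 1 else 0) := by
  have cartan_eq (k : ℕ) : cartan k m =
      (if k = m then 2 else 0) - (if k = m - 1 then 1 else 0)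
        - (if k = m + 1 then 1 else 0) := by
    unfold cartan
    split_ifs <;> omega
  simp only [cartan_eq, sum_sub_distrib, sum_ite_eq']

theorem sum_Icc_indicator_image_mul {R ι : Type*} [NonAssocSemiring R] {t : ι → ℕ}
    {K : Finset ι} {N : ℕ} (ht : Set.InjOn t K) (htN : ∀ k ∈ K, t k ≤ N) (f : ℕ → R) (r : ℕ) :
    ∑ j ∈ Icc (r + 1) N, (if j ∈ K.image t then 1 else 0) * f j =
      ∑ k ∈ K with r < t k, f (t k) := by
  have image_filter_eq :
      {j ∈ Icc (r + 1) N | j ∈ K.image t} = {k ∈ K | r < t k}.image t := by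
    ext j
    simp only [mem_filter, mem_Icc, mem_image]
    constructor
    · rintro ⟨⟨hrj, -⟩, k, hk, rfl⟩
      exact ⟨k, ⟨hk, hrj⟩, rfl⟩
    · rintro ⟨k, ⟨hk, hrk⟩, rfl⟩
      exact ⟨⟨hrk, htN k hk⟩, k, hk, rfl⟩
  simp only [ite_mul, one_mul, zero_mul]
  rw [← sum_filter, image_filter_eq,
    sum_image (ht.mono (coe_subset.2 (filter_subset _ _)))]

/-- Littelmann's string inequalities for the word `i 1, …, i N` and the weight with coordinates
`lam p = ⟨λ, α_p^∨⟩`. Coefficients in a ring `R` cover both the lattice points (`R = ℤ`) and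
the string polytope itself (`R = ℝ`). -/
def SatisfiesStringInequalities {R : Type*} [Ring R] [LE R] (N : ℕ) (i : ℕ → ℕ)
    (lam a : ℕ → R) : Prop :=
  ∀ r ∈ Icc 1 N, a r ≤ lam (i r) - ∑ j ∈ Icc (r + 1) N, a j * (cartan (i j) (i r) : R)

theorem SatisfiesStringInequalities.add {R : Type*} [Ring R] [PartialOrder R]
    [IsOrderedAddMonoid R] {N : ℕ} {i : ℕ → ℕ} {lam mu a b : ℕ → R}
    (ha : SatisfiesStringInequalities N i lam a) (hb : SatisfiesStringInequalities N i mu b) :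
    SatisfiesStringInequalities N i (lam + mu) (a + b) := by
  intro r hr
  simp only [Pi.add_apply, add_mul, sum_add_distrib, add_sub_add_comm]
  exact add_le_add (ha r hr) (hb r hr)

/-- `t 1 < ⋯ < t (n - 1)` are the greedy indices of the word `i 1, …, i N` for the pattern
`(n - 1, …, 1)`: each `t k` is the first position after `t (k - 1)` carrying the letter `n - k`.
The values of `t` outside `{1, …, n - 1}` are irrelevant. -/
structure IsGreedyDescent (n N : ℕ) (i t : ℕ → ℕ) : Prop where
  mem_Icc : ∀ k ∈ Icc 1 (n - 1), t k ∈ Icc 1 N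
  letter : ∀ k ∈ Icc 1 (n - 1), i (t k) = n - k
  lt_succ : ∀ k, 1 ≤ k → k + 1 ≤ n - 1 → t k < t (k + 1)
  letter_ne_of_lt_first : ∀ r ∈ Icc 1 N, r < t 1 → i r ≠ n - 1
  letter_ne_of_between : ∀ k, 2 ≤ k → k ≤ n - 1 →
    ∀ r ∈ Icc 1 N, t (k - 1) < r → r < t k → i r ≠ n - k

namespace IsGreedyDescent

variable {n N : ℕ} {i t : ℕ → ℕ}

theorem injOn (h : IsGreedyDescent n N i t) : Set.InjOn t (Icc 1 (n - 1)) := by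
  intro k hk l hl hkl
  have letter_eq : n - k = n - l := by rw [← h.letter k hk, ← h.letter l hl, hkl]
  simp only [coe_Icc, Set.mem_Icc] at hk hl
  omega

theorem mem_image_iff (h : IsGreedyDescent n N i t) {k r : ℕ} (hk : k ∈ Icc 1 (n - 1))
    (hrk : i r = n - k) : r ∈ (Icc 1 (n - 1)).image t ↔ t k = r := by
  refine ⟨fun hr => ?_, fun hr => mem_image.2 ⟨k, hk, hr⟩⟩
  obtain ⟨l, hl, rfl⟩ := mem_image.1 hr
  have letter_eq := h.letter l hl
  rw [Finset.mem_Icc] at hk hl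
  rw [show k = l by omega]

theorem two_le_and_lt_pred (h : IsGreedyDescent n N i t) {k r : ℕ} (hk : k ∈ Icc 1 (n - 1))
    (hr : r ∈ Icc 1 N) (hrk : i r = n - k) (hlt : r < t k) : 2 ≤ k ∧ r < t (k - 1) := by
  rw [Finset.mem_Icc] at hk
  have two_le : 2 ≤ k := by
    by_contra hk2
    obtain rfl : k = 1 := by omega
    exact h.letter_ne_of_lt_first r hr hlt hrk
  refine ⟨two_le, lt_of_le_of_ne ?_ ?_⟩
  · by_contra! hpred
    exact h.letter_ne_of_between k two_le hk.2 r hr hpred hlt hrk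
  · rintro rfl
    have letter_pred := h.letter (k - 1) (Finset.mem_Icc.2 (by omega))
    omega

theorem indicator_add_sum_cartan_le (h : IsGreedyDescent n N i t) {k r : ℕ}
    (hk : k ∈ Icc 1 (n - 1)) (hr : r ∈ Icc 1 N) (hrk : i r = n - k) :
    (if t k = r then 1 else 0) + ∑ l ∈ Icc 1 (n - 1) with r < t l, cartan l k ≤
      if k = n - 1 then 1 else 0 := by
  have hk' := Finset.mem_Icc.1 hk
  have pred_later : r < t k → k - 1 ∈ Icc 1 (n - 1) ∧ r < t (k - 1) := fun hlt => by
    obtain ⟨two_le, hpred⟩ := h.two_le_and_lt_pred hk hr hrk hlt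
    exact ⟨Finset.mem_Icc.2 (by omega), hpred⟩
  have succ_later : k ≠ n - 1 → r ≤ t k → k + 1 ∈ Icc 1 (n - 1) ∧ r < t (k + 1) :=
    fun hne hle => ⟨Finset.mem_Icc.2 (by omega), hle.trans_lt (h.lt_succ k hk'.1 (by omega))⟩
  rw [sum_cartan (by omega)]
  simp only [mem_filter, hk, true_and]
  grind

theorem satisfiesStringInequalities_indicator {R : Type*} [Ring R] [PartialOrder R]
    [IsOrderedRing R] (h : IsGreedyDescent n N i t)
    (hi : ∀ r ∈ Icc 1 N, 1 ≤ i r ∧ i r ≤ n - 1) {mu : ℕ → R}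
    (hmu : ∀ p ∈ Icc 1 (n - 1), 0 ≤ mu p) (hmu_one : 1 ≤ mu 1) :
    SatisfiesStringInequalities N i mu
      fun r => if r ∈ (Icc 1 (n - 1)).image t then 1 else 0 := by
  intro r hr
  have hir := hi r hr
  obtain ⟨k, hk, hrk⟩ : ∃ k ∈ Icc 1 (n - 1), i r = n - k :=
    ⟨n - i r, Finset.mem_Icc.2 (by omega), by omega⟩
  have cartan_letter : ∀ l ∈ ({l ∈ Icc 1 (n - 1) | r < t l} : Finset ℕ),
      (cartan (i (t l)) (i r) : R) = (cartan l k : R) := fun l hl => by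
    simp only [mem_filter, Finset.mem_Icc] at hk hl
    rw [h.letter l (Finset.mem_Icc.2 hl.1), hrk, cartan_sub_sub (by omega) (by omega)]
  rw [le_sub_iff_add_le, sum_Icc_indicator_image_mul h.injOn
    (fun l hl => (Finset.mem_Icc.1 (h.mem_Icc l hl)).2), sum_congr rfl cartan_letter]
  simp only [h.mem_image_iff hk hrk]
  calc (if t k = r then 1 else 0) + ∑ l ∈ Icc 1 (n - 1) with r < t l, (cartan l k : R)
      = (((if t k = r then 1 else 0) + ∑ l ∈ Icc 1 (n - 1) with r < t l, cartan l k : ℤ) : R) := by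
        push_cast
        rfl
    _ ≤ ((if k = n - 1 then 1 else 0 : ℤ) : R) :=
        Int.cast_mono (h.indicator_add_sum_cartan_le hk hr hrk)
    _ ≤ mu (i r) := by
        split_ifs with hlast
        · have letter_one : i r = 1 := by omega
          simpa [letter_one] using hmu_one
        · simpa using hmu (i r) (Finset.mem_Icc.2 hir)

end IsGreedyDescent

theorem thetaPair_nonneg (n p : ℕ) : 0 ≤ thetaPair n p := by
  unfold thetaPair
  split_ifs <;> decide

theorem add_z_nsub1_preserves_string_inequalities_general {R : Type*} [Ring R] [PartialOrder R]
    [IsOrderedRing R] {n N : ℕ} {i t : ℕ → ℕ} (hi : ∀ r ∈ Icc 1 N, 1 ≤ i r ∧ i r ≤ n - 1)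
    (ht : IsGreedyDescent n N i t) {z : ℕ → R}
    (hz : ∀ r, z r = if r ∈ (Icc 1 (n - 1)).image t then 1 else 0) {lam mu a : ℕ → R}
    (hmu : ∀ p ∈ Icc 1 (n - 1), 0 ≤ mu p) (hmu_one : 1 ≤ mu 1)
    (ha_nonneg : ∀ r ∈ Icc 1 N, 0 ≤ a r) (ha_string : SatisfiesStringInequalities N i lam a) :
    (∀ r ∈ Icc 1 N, 0 ≤ (a + z) r) ∧ SatisfiesStringInequalities N i (lam + mu) (a + z) := by
  obtain rfl := funext hz
  refine ⟨fun r hr => add_nonneg (ha_nonneg r hr) ?_,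
    ha_string.add (ht.satisfiesStringInequalities_indicator hi hmu hmu_one)⟩
  dsimp only
  split_ifs
  exacts [zero_le_one, le_rfl]

/-- for a reduced word `(i 1, …, i N)`, `N = n(n-1)/2`, of the longest
element `w₀` of `Sₙ` (`n ≥ 3`), let `z` be the indicator vector of the greedy indices
for the pattern `(n-1, n-2, …, 1)`, and let `λ = Σ lam a • ω_a` be a dominant integral
weight (so `⟨λ, α_p^∨⟩ = lam p`).  If `a ∈ ℤ_{≥0}^N` satisfies Littelmann's string
inequalities for `λ`, then `a + z` satisfies them for `λ + θ`.
This is the Littelmann-inequality part of the embedding `ψⁿ_{n-1} : S_i(λ) → S_i(λ+θ)`,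
`x ↦ x + z_{n-1}`. -/
theorem add_z_nsub1_preserves_string_inequalities
    (n N : ℕ) (hn : 3 ≤ n) (hN : N = n * (n - 1) / 2)
    (i : ℕ → ℕ) (hi : ∀ t ∈ Finset.Icc 1 N, 1 ≤ i t ∧ i t ≤ n - 1)
    (hword : ∀ j ∈ Finset.Icc 1 n,
      (((List.range N).map fun t => adjSwap (i (t + 1))).prod : Equiv.Perm ℕ) j
        = n + 1 - j)
    (t : ℕ → ℕ)
    (ht_range : ∀ k ∈ Finset.Icc 1 (n - 1), t k ∈ Finset.Icc 1 N)
    (ht_letter : ∀ k ∈ Finset.Icc 1 (n - 1), i (t k) = n - k)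
    (ht_mono : ∀ k, 1 ≤ k → k + 1 ≤ n - 1 → t k < t (k + 1))
    (ht_min1 : ∀ r ∈ Finset.Icc 1 N, r < t 1 → i r ≠ n - 1)
    (ht_min : ∀ k, 2 ≤ k → k ≤ n - 1 →
      ∀ r ∈ Finset.Icc 1 N, t (k - 1) < r → r < t k → i r ≠ n - k)
    (z : ℕ → ℤ)
    (hz : ∀ r, z r = if r ∈ (Finset.Icc 1 (n - 1)).image t then 1 else 0)
    (lam : ℕ → ℤ) (hlam : ∀ p ∈ Finset.Icc 1 (n - 1), 0 ≤ lam p)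
    (a : ℕ → ℤ) (ha_nonneg : ∀ r ∈ Finset.Icc 1 N, 0 ≤ a r)
    (ha_string : ∀ r ∈ Finset.Icc 1 N,
      a r ≤ lam (i r) - ∑ j ∈ Finset.Icc (r + 1) N, a j * cartan (i j) (i r)) :
    (∀ r ∈ Finset.Icc 1 N, 0 ≤ a r + z r) ∧
    (∀ r ∈ Finset.Icc 1 N,
      a r + z r ≤ (lam (i r) + thetaPair n (i r))
        - ∑ j ∈ Finset.Icc (r + 1) N, (a j + z j) * cartan (i j) (i r)) := by
  exact add_z_nsub1_preserves_string_inequalities_general (mu := thetaPair n) hi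
    ⟨ht_range, ht_letter, ht_mono, ht_min1, ht_min⟩ hz
    (fun p _ => thetaPair_nonneg n p) (by simp [thetaPair]) ha_nonneg ha_string
end
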